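/- Let p, q ∈ M_1 with p ≠ 1, q ≠ 1 and p ≠ q, and suppose v_1 := p·x = q·y, v_2 := p·w = q·z and v_3 := p·u = q·v for some letters x, y, w, z, u, v ∈ X_1. Then v_1, v_2 and v_3 are intersection bases, and v_1 = v_3 or v_2 = v_3 or v_1 = v_2. -/

import Mathlib

namespace Malcev

/-- The alphabet `X_n`: letters `a, b, c, d` together with `A_i, B_i, C_i, D_i`
for `i` ranging over `Fin n` (so `A ⟨0, _⟩` represents `A_1`, etc.). -/
inductive Letter (n : ℕ) : Type
  | a | b | c | d
  | A (i : Fin n) | B (i : Fin n) | C (i : Fin n) | D (i : Fin n)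
  deriving DecidableEq

open FreeMonoid

/-- The defining relations `ρ_n`. -/
inductive rel (n : ℕ) : FreeMonoid (Letter n) → FreeMonoid (Letter n) → Prop
  | da (h : 0 < n) :
      rel n (of .d * of .a) (of (.A ⟨0, h⟩) * of (.C ⟨0, h⟩))
  | AD (i : ℕ) (h : i + 1 < n) :
      rel n (of (.A ⟨i, Nat.lt_of_succ_lt h⟩) * of (.D ⟨i, Nat.lt_of_succ_lt h⟩))
            (of (.A ⟨i + 1, h⟩) * of (.C ⟨i + 1, h⟩))
  | An (h : 0 < n) :
      rel n (of (.A ⟨n - 1, Nat.sub_lt h Nat.one_pos⟩) * of (.D ⟨n - 1, Nat.sub_lt h Nat.one_pos⟩))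
            (of .d * of .b)
  | cb (h : 0 < n) :
      rel n (of .c * of .b)
            (of (.B ⟨n - 1, Nat.sub_lt h Nat.one_pos⟩) * of (.D ⟨n - 1, Nat.sub_lt h Nat.one_pos⟩))
  | BC (i : ℕ) (h : i + 1 < n) :
      rel n (of (.B ⟨i + 1, h⟩) * of (.C ⟨i + 1, h⟩))
            (of (.B ⟨i, Nat.lt_of_succ_lt h⟩) * of (.D ⟨i, Nat.lt_of_succ_lt h⟩))

/-- The congruence on the free monoid generated by `ρ_n`. -/
def Mcon (n : ℕ) : Con (FreeMonoid (Letter n)) := conGen (rel n)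

/-- The presented monoid `M_n = Mon⟨X_n | ρ_n⟩`. -/
abbrev Mn (n : ℕ) : Type := (Mcon n).Quotient

/-- The quotient (natural) map `X_n* → M_n`. -/
def mk (n : ℕ) : FreeMonoid (Letter n) →* Mn n := (Mcon n).mk'

/-- The image in `M_n` of a single letter. -/
def gen {n : ℕ} (x : Letter n) : Mn n := mk n (of x)

/-- The image in `M_n` of a word (given as a list of letters). -/
def word {n : ℕ} (w : List (Letter n)) : Mn n := mk n (ofList w)

/-- The set `P_n = {c, d, A_1, …, A_n, B_1, …, B_n}`. -/
def inP {n : ℕ} : Letter n → Prop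
  | .c => True | .d => True | .A _ => True | .B _ => True | _ => False

/-- The set `Q_n = {a, b, C_1, …, C_n, D_1, …, D_n}`. -/
def inQ {n : ℕ} : Letter n → Prop
  | .a => True | .b => True | .C _ => True | .D _ => True | _ => False

/-- `inR x y` means the two-letter word `xy` belongs to
`R_n = {db, A_1C_1, …, A_nC_n, B_1D_1, …, B_nD_n}`. -/
def inR {n : ℕ} : Letter n → Letter n → Prop
  | .d, .b => True
  | .A i, .C j => i = j
  | .B i, .D j => i = j
  | _, _ => False

/-- `inL x y` means the two-letter word `xy` belongs to
`L_n = {cb, da, A_1D_1, …, A_nD_n, B_2C_2, …, B_nC_n}`. -/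
def inL {n : ℕ} : Letter n → Letter n → Prop
  | .c, .b => True
  | .d, .a => True
  | .A i, .D j => i = j
  | .B i, .C j => i = j ∧ 1 ≤ i.val
  | _, _ => False

/-- A word is in left normal form if no two consecutive letters form a word in `R_n`. -/
def LeftNormal {n : ℕ} (w : List (Letter n)) : Prop :=
  List.Chain' (fun x y => ¬ inR x y) w

/-- `v ∈ M_n` is an intersection base if some word `a_1 ⋯ a_m` (`m ≥ 2`) in left
normal form equals `v` in `M_n` and its final two letters form a word in `L_n`. -/
def IsIntersectionBase {n : ℕ} (v : Mn n) : Prop :=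
  ∃ (w : List (Letter n)) (x y : Letter n),
    LeftNormal (w ++ [x, y]) ∧ word (w ++ [x, y]) = v ∧ inL x y

/-- The principal right ideal `pM_n`. -/
def rIdeal {n : ℕ} (p : Mn n) : Set (Mn n) := {x | ∃ m, x = p * m}

/-!
Orient the defining relations from `R_n` to `L_n`. Two-letter words in `R_n ∪ L_n` start with a
letter of `P_n` and end with a letter of `Q_n`, so left-hand sides never overlap and every element
of `M_n` has a unique left normal form, which multiplication by a letter changes at most by
rewriting the final two letters.

Let `p * x = q * y` with `p ≠ q`. The left normal forms of `p` and `q` then differ only in their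
last letters `r` and `s`. Hence `rx` or `sy` is in `R_n`, and is rewritten to a word in `L_n` with
which `p * x` ends. A word in `R_n` is determined by its first letter, so `r` determines the product
in the first case and `s` does in the second: there are at most two products.
-/

variable {n : ℕ} {x y : Letter n}

theorem rightUnique_inR : Relator.RightUnique (inR (n := n)) := by
  intro x y z hy hz
  cases x <;> cases y <;> cases z <;> simp_all [inR]

theorem not_inR_of_inP_right (hy : inP y) : ¬ inR x y := by
  cases x <;> cases y <;> simp_all [inR, inP]

theorem inP_left_of_inL (h : inL x y) : inP x := by
  cases x <;> cases y <;> simp_all [inL, inP]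

theorem not_inR_of_inL (h : inL x y) : ¬ inR x y := by
  cases x <;> cases y <;> simp_all [inL, inR]

theorem mk_eq_of_rel {v w : FreeMonoid (Letter n)} (h : rel n v w) : mk n v = mk n w :=
  (Con.eq _).2 (ConGen.Rel.of _ _ h)

theorem word_append (v w : List (Letter n)) : word (v ++ w) = word v * word w := by
  simp only [word, FreeMonoid.ofList_append, map_mul]

theorem word_pair (x y : Letter n) : word [x, y] = gen x * gen y :=
  word_append [x] [y]

theorem induction_mul_gen {motive : Mn n → Prop} (p : Mn n) (one : motive 1)
    (mul_gen : ∀ p x, motive p → motive (p * gen x)) : motive p := by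
  obtain ⟨w, rfl⟩ : ∃ w : List (Letter n), word w = p := Con.mk'_surjective p
  induction w using List.reverseRecOn with
  | nil => exact one
  | append_singleton w x ih =>
    rw [word_append]
    exact mul_gen _ x ih

variable [NeZero n]

/-- One rewriting step on the two-letter word `xy`: a word in `R_n` is replaced by the word in `L_n`
related to it, any other word is left alone. -/
def reducePair : Letter n → Letter n → Letter n × Letter n
  | .d, .b =>
    have h := Nat.sub_lt (NeZero.pos n) Nat.one_pos
    (.A ⟨n - 1, h⟩, .D ⟨n - 1, h⟩)
  | .A i, .C j =>
    if i = j then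
      match i with
      | ⟨0, _⟩ => (.d, .a)
      | ⟨k + 1, h⟩ => (.A ⟨k, Nat.lt_of_succ_lt h⟩, .D ⟨k, Nat.lt_of_succ_lt h⟩)
    else (.A i, .C j)
  | .B i, .D j =>
    if i = j then
      if h : i.val + 1 < n then (.B ⟨i + 1, h⟩, .C ⟨i + 1, h⟩) else (.c, .b)
    else (.B i, .D j)
  | x, y => (x, y)

theorem reducePair_of_not_inR (h : ¬ inR x y) : reducePair x y = (x, y) := by
  fun_cases reducePair x y <;> simp_all [inR]

theorem inL_reducePair_of_inR (h : inR x y) : inL (reducePair x y).1 (reducePair x y).2 := by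
  fun_cases reducePair x y <;> simp_all [inR, inL]

theorem not_inR_reducePair (x y : Letter n) : ¬ inR (reducePair x y).1 (reducePair x y).2 := by
  by_cases h : inR x y
  · exact not_inR_of_inL (inL_reducePair_of_inR h)
  · rwa [reducePair_of_not_inR h]

theorem gen_mul_gen_reducePair (x y : Letter n) :
    gen (reducePair x y).1 * gen (reducePair x y).2 = gen x * gen y := by
  simp only [gen, ← map_mul]
  fun_cases reducePair x y
  case case1 => exact mk_eq_of_rel (.An (NeZero.pos n))
  case case2 => exact mk_eq_of_rel (.da (NeZero.pos n))
  case case3 k h => exact mk_eq_of_rel (.AD k h)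
  case case5 i h => exact mk_eq_of_rel (.BC i h)
  case case6 i h =>
    obtain rfl : i = ⟨n - 1, Nat.sub_lt (NeZero.pos n) Nat.one_pos⟩ := by ext; grind
    exact mk_eq_of_rel (.cb (NeZero.pos n))
  all_goals rfl

theorem exists_reducePair_eq_of_rel {v w : FreeMonoid (Letter n)} (h : rel n v w) :
    ∃ x y x' y', v = of x * of y ∧ w = of x' * of y' ∧ inP x ∧ inP x' ∧
      reducePair x y = reducePair x' y' := by
  cases h <;>
    exact ⟨_, _, _, _, rfl, rfl, trivial, trivial, by grind [reducePair]⟩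

/-- Right multiplication by a letter on left normal forms. Words are reversed, so that the last
letter is the head of the list. -/
def push : List (Letter n) → Letter n → List (Letter n)
  | [], y => [y]
  | x :: l, y => (reducePair x y).2 :: (reducePair x y).1 :: l

theorem push_of_inP (l : List (Letter n)) (hx : inP x) : push l x = x :: l := by
  cases l with
  | nil => rfl
  | cons z l => rw [push, reducePair_of_not_inR (not_inR_of_inP_right hx)]

theorem word_reverse_push (l : List (Letter n)) (x : Letter n) :
    word (push l x).reverse = word l.reverse * gen x := by
  cases l with
  | nil => exact (one_mul (gen x)).symm
  | cons z l =>
    simp only [push, List.reverse_cons, List.append_assoc, List.singleton_append]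
    rw [word_append, word_append, word_pair, gen_mul_gen_reducePair, mul_assoc]
    rfl

theorem leftNormal_reverse_push {l : List (Letter n)} (hl : LeftNormal l.reverse) (x : Letter n) :
    LeftNormal (push l x).reverse := by
  change List.IsChain _ _ at hl
  change List.IsChain _ _
  rw [List.isChain_reverse] at hl ⊢
  rcases l with _ | ⟨y, _ | ⟨z, l⟩⟩
  · exact List.isChain_singleton _
  · exact List.isChain_pair.2 (not_inR_reducePair y x)
  · obtain ⟨hzy, hl⟩ := List.isChain_cons_cons.1 hl
    refine .cons_cons (not_inR_reducePair y x) (.cons_cons ?_ hl)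
    by_cases hyx : inR y x
    · exact not_inR_of_inP_right (inP_left_of_inL (inL_reducePair_of_inR hyx))
    · rwa [reducePair_of_not_inR hyx]

theorem exists_cons_of_push_eq_push {k l : List (Letter n)} (hkl : k ≠ l)
    (h : push k x = push l y) :
    ∃ r s t, k = r :: t ∧ l = s :: t ∧ r ≠ s ∧ reducePair r x = reducePair s y := by
  cases k <;> cases l <;> grind [push]

/-- The right action of `X_n*` on reversed words by `push`. -/
def pushHom : FreeMonoid (Letter n) →* (Function.End (List (Letter n)))ᵐᵒᵖ :=
  FreeMonoid.lift fun x => MulOpposite.op fun l => push l x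

theorem Mcon_le_ker_pushHom : Mcon n ≤ Con.ker pushHom := by
  refine Con.conGen_le.2 fun v w h => ?_
  obtain ⟨x, y, x', y', rfl, rfl, hx, hx', hred⟩ := exists_reducePair_eq_of_rel h
  refine MulOpposite.unop_injective (funext fun l => ?_)
  change push (push l x) y = push (push l x') y'
  rw [push_of_inP l hx, push_of_inP l hx', push, push, hred]

/-- The reversed left normal form of an element of `M_n`, obtained by letting it act on the empty
word. -/
def revNormalForm (p : Mn n) : List (Letter n) :=
  ((Mcon n).lift pushHom Mcon_le_ker_pushHom p).unop []

theorem revNormalForm_one : revNormalForm (1 : Mn n) = [] := by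
  rw [revNormalForm, map_one]
  rfl

theorem revNormalForm_mul_gen (p : Mn n) (x : Letter n) :
    revNormalForm (p * gen x) = push (revNormalForm p) x := by
  rw [revNormalForm, map_mul]
  rfl

theorem word_reverse_revNormalForm (p : Mn n) : word (revNormalForm p).reverse = p := by
  induction p using induction_mul_gen with
  | one => rw [revNormalForm_one]; rfl
  | mul_gen p x ih => rw [revNormalForm_mul_gen, word_reverse_push, ih]

theorem revNormalForm_injective : Function.Injective (revNormalForm (n := n)) :=
  Function.LeftInverse.injective (g := fun l : List (Letter n) => word l.reverse)
    word_reverse_revNormalForm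

theorem leftNormal_reverse_revNormalForm (p : Mn n) : LeftNormal (revNormalForm p).reverse := by
  induction p using induction_mul_gen with
  | one => rw [revNormalForm_one]; exact List.isChain_nil
  | mul_gen p x ih => rw [revNormalForm_mul_gen]; exact leftNormal_reverse_push ih x

theorem isIntersectionBase_of_revNormalForm_eq {v : Mn n} {l : List (Letter n)}
    (hv : revNormalForm v = y :: x :: l) (hxy : inL x y) : IsIntersectionBase v := by
  have hrev : l.reverse ++ [x, y] = (revNormalForm v).reverse := by simp [hv]
  refine ⟨l.reverse, x, y, ?_, ?_, hxy⟩
  · exact hrev ▸ leftNormal_reverse_revNormalForm v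
  · rw [hrev, word_reverse_revNormalForm]

/-- Appending `x` to the left normal form of `p` creates a final factor in `R_n`, so that computing
the left normal form of `p * gen x` takes a rewriting step. -/
def IsReducible (p : Mn n) (x : Letter n) : Prop :=
  ∃ r t, revNormalForm p = r :: t ∧ inR r x

theorem rightUnique_isReducible : Relator.RightUnique (IsReducible (n := n)) := by
  rintro p x y ⟨r, t, hr, hx⟩ ⟨s, t', hs, hy⟩
  obtain ⟨rfl, rfl⟩ := List.cons.inj (hr.symm.trans hs)
  exact rightUnique_inR hx hy

theorem IsReducible.isIntersectionBase {p : Mn n} (h : IsReducible p x) :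
    IsIntersectionBase (p * gen x) := by
  obtain ⟨r, t, hr, hrx⟩ := h
  have hnf : revNormalForm (p * gen x) = (reducePair r x).2 :: (reducePair r x).1 :: t := by
    rw [revNormalForm_mul_gen, hr, push]
  exact isIntersectionBase_of_revNormalForm_eq hnf (inL_reducePair_of_inR hrx)

theorem isReducible_or_isReducible_of_mul_gen_eq {p q : Mn n} (hpq : p ≠ q)
    (h : p * gen x = q * gen y) : IsReducible p x ∨ IsReducible q y := by
  have hpush := congrArg revNormalForm h
  rw [revNormalForm_mul_gen, revNormalForm_mul_gen] at hpush
  obtain ⟨r, s, t, hp, hq, hrs, hred⟩ :=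
    exists_cons_of_push_eq_push (revNormalForm_injective.ne hpq) hpush
  by_contra! hirr
  have hrx : ¬ inR r x := fun hr => hirr.1 ⟨r, t, hp, hr⟩
  have hsy : ¬ inR s y := fun hs => hirr.2 ⟨s, t, hq, hs⟩
  rw [reducePair_of_not_inR hrx, reducePair_of_not_inR hsy] at hred
  exact hrs (congrArg Prod.fst hred)

theorem isIntersectionBase_of_mul_gen_eq {p q : Mn n} (hpq : p ≠ q)
    (h : p * gen x = q * gen y) : IsIntersectionBase (p * gen x) :=
  (isReducible_or_isReducible_of_mul_gen_eq hpq h).elim IsReducible.isIntersectionBase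
    fun hq => h ▸ hq.isIntersectionBase

theorem M1_two_intersection_bases_general {p q : Mn n} (hpq : p ≠ q)
    {x y w z u v : Letter n} {v₁ v₂ v₃ : Mn n}
    (h1x : v₁ = p * gen x) (h1y : v₁ = q * gen y)
    (h2w : v₂ = p * gen w) (h2z : v₂ = q * gen z)
    (h3u : v₃ = p * gen u) (h3v : v₃ = q * gen v) :
    IsIntersectionBase v₁ ∧ IsIntersectionBase v₂ ∧ IsIntersectionBase v₃ ∧
    (v₁ = v₃ ∨ v₂ = v₃ ∨ v₁ = v₂) := by
  have h₁ := h1x.symm.trans h1y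
  have h₂ := h2w.symm.trans h2z
  have h₃ := h3u.symm.trans h3v
  refine ⟨h1x ▸ isIntersectionBase_of_mul_gen_eq hpq h₁,
    h2w ▸ isIntersectionBase_of_mul_gen_eq hpq h₂,
    h3u ▸ isIntersectionBase_of_mul_gen_eq hpq h₃, ?_⟩
  have eq_of_isReducible {r : Mn n} {s t : Letter n} (hs : IsReducible r s)
      (ht : IsReducible r t) : s = t := rightUnique_isReducible hs ht
  have hred₁ := isReducible_or_isReducible_of_mul_gen_eq hpq h₁
  have hred₂ := isReducible_or_isReducible_of_mul_gen_eq hpq h₂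
  have hred₃ := isReducible_or_isReducible_of_mul_gen_eq hpq h₃
  -- By the pigeonhole principle, two of the three products are reducible on the same side.
  grind

/-- in `M_1`, three common one-letter extensions give at most two
distinct intersection bases. -/
theorem M1_two_intersection_bases (p q : Mn 1) (hp : p ≠ 1) (hq : q ≠ 1)
    (hpq : p ≠ q) (x y w z u v : Letter 1) (v₁ v₂ v₃ : Mn 1)
    (h1x : v₁ = p * gen x) (h1y : v₁ = q * gen y)
    (h2w : v₂ = p * gen w) (h2z : v₂ = q * gen z)
    (h3u : v₃ = p * gen u) (h3v : v₃ = q * gen v) :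
    IsIntersectionBase v₁ ∧ IsIntersectionBase v₂ ∧ IsIntersectionBase v₃ ∧
    (v₁ = v₃ ∨ v₂ = v₃ ∨ v₁ = v₂) :=
  M1_two_intersection_bases_general hpq h1x h1y h2w h2z h3u h3v

end Malcev
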